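/- Let M ≥ 0, ρ ∈ (0,1/2) and c ∈ L^∞(B_ρ(e₁)). Suppose u ∈ C^{2s+α}(B_ρ(e₁)) ∩ 𝒜_s(ℝⁿ) for some α > 0 with 2s+α not an integer and (−Δ)^s u + c·u ≤ M pointwise in B_ρ(e₁) (no sign assumption on u is made). Then there exists C_ρ > 0, depending only on n, s, ‖c‖_{L^∞(B_ρ(e₁))} and ρ, such that sup_{B_{ρ/2}(e₁)} u ≤ C_ρ·( ‖u‖_{𝒜_s(ℝⁿ)} + M ). -/

import Mathlib

/-!
The bound is a touching argument with the barrier `τ (R² - |y - e₁|²)^{-(n+2)}`, `R = 3ρ/4`.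
Let `x` maximise `(R² - |y - e₁|²)^{n+2} u(y)` over the closed ball of radius `R`; if the maximum
is positive then `x` is interior. Write `g = R² - |x - e₁|²` and `r = θ g` with `θ` small, depending
only on `n`, `s` and the bound `K` for the zeroth order coefficient.

* By Markov's inequality, the set `{u > u(x)/2} ∩ B_r(x)` has measure at most
  `C ‖u‖_{𝒜ₛ} / u(x)` (`bad_set_measure`). If this is not a small fraction of `|B_r|`, then
  `u(x) ≤ C r^{-n} ‖u‖_{𝒜ₛ}` and the estimate follows at once.
* Otherwise `u ≤ u(x)/2` on at least three quarters of `B_r(x)`, which contributes at least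
  `c u(x) r^{-2s}` to the operator at `x`. Near `x`, `u` lies below the second-order expansion of
  the barrier (`touching_quadratic`); its linear part cancels by symmetry and its quadratic part
  costs `C u(x) θ² r^{-2s}` (`near_lower_bound`). The region outside `B_r(x)` costs
  `C r^{-n-2s-2} ‖u‖_{𝒜ₛ}` (`far_lower_bound`), since the antisymmetric kernel is dominated by the
  weight of `𝒜ₛ` there (`aKernel_tail`).

For small `θ` the positive term absorbs everything proportional to `u(x)`, including the zeroth
order term, and the differential inequality at `x` bounds `u(x) g^{n+2}` by
`C (‖u‖_{𝒜ₛ} + M)` (`touching_bound`). The exponent `n + 2` of the barrier is the one for which the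
far term scales correctly.
-/

open MeasureTheory Metric Filter Topology

noncomputable section

/-- Euclidean space `ℝⁿ`. -/
abbrev Euc (n : ℕ) := EuclideanSpace ℝ (Fin n)

/-- Reflection `x ↦ x_* = (-x₁, x')` across the hyperplane `{x₁ = 0}`. -/
def reflFirst (n : ℕ) [NeZero n] (x : Euc n) : Euc n :=
  x - (2 * x 0) • EuclideanSpace.single 0 1

/-- The open half space `ℝⁿ₊ = {x : x₁ > 0}`. -/
def halfSpace (n : ℕ) [NeZero n] : Set (Euc n) := {x | 0 < x 0}

/-- `u` is antisymmetric: `u(x_*) = -u(x)`. -/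
def AntiSymmFn (n : ℕ) [NeZero n] (u : Euc n → ℝ) : Prop :=
  ∀ x, u (reflFirst n x) = - u x

/-- The normalising constant `c_{n,s}` of the fractional Laplacian. -/
def cns (n : ℕ) (s : ℝ) : ℝ :=
  s * (4 : ℝ) ^ s * Real.Gamma (((n : ℝ) + 2 * s) / 2) /
    (Real.pi ^ ((n : ℝ) / 2) * Real.Gamma (1 - s))

/-- The constant `γ_{n,s}` of the mean value formula. -/
def gammans (n : ℕ) (s : ℝ) : ℝ :=
  Real.sin (Real.pi * s) * Real.Gamma ((n : ℝ) / 2) / Real.pi ^ ((n : ℝ) / 2 + 1)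

/-- The first standard basis vector `e₁`. -/
def e1 (n : ℕ) [NeZero n] : Euc n := EuclideanSpace.single 0 1

/-- `‖u‖_{𝒜ₛ(ℝⁿ)} = ∫_{ℝⁿ₊} x₁|u(x)|/(1+|x|^{n+2s+2}) dx`. -/
def ANorm (n : ℕ) [NeZero n] (s : ℝ) (u : Euc n → ℝ) : ℝ :=
  ∫ x in halfSpace n, x 0 * |u x| / (1 + ‖x‖ ^ ((n : ℝ) + 2 * s + 2))

/-- `u ∈ 𝒜ₛ(ℝⁿ)`. -/
def MemA (n : ℕ) [NeZero n] (s : ℝ) (u : Euc n → ℝ) : Prop :=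
  AntiSymmFn n u ∧ LocallyIntegrable u volume ∧
    IntegrableOn (fun x => x 0 * |u x| / (1 + ‖x‖ ^ ((n : ℝ) + 2 * s + 2))) (halfSpace n) volume

/-- `u ∈ ℒₛ(ℝⁿ)`. -/
def MemL (n : ℕ) (s : ℝ) (u : Euc n → ℝ) : Prop :=
  LocallyIntegrable u volume ∧
    Integrable (fun x => |u x| / (1 + ‖x‖ ^ ((n : ℝ) + 2 * s))) volume

/-- Membership in the Hölder space `C^β = C^{⌊β⌋, β-⌊β⌋}` on `Ω`. -/
def MemHolderOn {X : Type*} [NormedAddCommGroup X] [NormedSpace ℝ X]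
    (β : ℝ) (Ω : Set X) (u : X → ℝ) : Prop :=
  ContDiffOn ℝ (⌊β⌋₊ : ℕ) u Ω ∧
    ∃ C : NNReal, HolderOnWith C (β - ⌊β⌋₊).toNNReal (iteratedFDerivWithin ℝ ⌊β⌋₊ u Ω) Ω

/-- `K` bounds the `C^β = C^{⌊β⌋, β-⌊β⌋}` norm of `u` on `Ω`. -/
def HolderBoundBy {X : Type*} [NormedAddCommGroup X] [NormedSpace ℝ X]
    (β : ℝ) (Ω : Set X) (u : X → ℝ) (K : ℝ) : Prop :=
  (∀ i ≤ ⌊β⌋₊, ∀ x ∈ Ω, ‖iteratedFDerivWithin ℝ i u Ω x‖ ≤ K) ∧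
    HolderOnWith K.toNNReal (β - ⌊β⌋₊).toNNReal (iteratedFDerivWithin ℝ ⌊β⌋₊ u Ω) Ω

/-- `β` is not an integer. -/
def NotInteger (β : ℝ) : Prop := ∀ k : ℤ, β ≠ k

/-- The antisymmetric kernel `|x-y|^{-n-2s} - |x_*-y|^{-n-2s}`. -/
def aKernel (n : ℕ) [NeZero n] (s : ℝ) (x y : Euc n) : ℝ :=
  ‖x - y‖ ^ (-((n : ℝ) + 2 * s)) - ‖reflFirst n x - y‖ ^ (-((n : ℝ) + 2 * s))

/-- `(-Δ)ˢ u (x) = L` in the antisymmetric sense of Definition 1.4: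
the truncated integrals over `ℝⁿ₊ ∖ B_ε(x)` (plus the constant zero-th order term)
converge to `L` as `ε → 0⁺`. -/
def HasAntiFracLap (n : ℕ) [NeZero n] (s : ℝ) (u : Euc n → ℝ) (x : Euc n) (L : ℝ) : Prop :=
  Filter.Tendsto
    (fun ε : ℝ =>
      cns n s * (∫ y in halfSpace n \ Metric.ball x ε, aKernel n s x y * (u x - u y)) +
        (cns 1 s / s) * u x * (x 0) ^ (-(2 * s)))
    (𝓝[>] (0 : ℝ)) (𝓝 L)

/-- `(-Δ)ˢ u (x) = L` in the principal value sense. -/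
def HasPVFracLap (n : ℕ) (s : ℝ) (u : Euc n → ℝ) (x : Euc n) (L : ℝ) : Prop :=
  Filter.Tendsto
    (fun ε : ℝ =>
      cns n s * ∫ y in (Metric.ball x ε)ᶜ, (u x - u y) / ‖x - y‖ ^ ((n : ℝ) + 2 * s))
    (𝓝[>] (0 : ℝ)) (𝓝 L)


/-! ### An elementary inequality for negative powers -/

/-- Second-order upper expansion of `(1 - a)^{-N}`. -/
lemma inv_pow_le_quadratic (N : ℕ) :
    ∃ C : ℝ, 0 ≤ C ∧ ∀ a : ℝ, |a| ≤ 1 / 2 → ((1 - a) ^ N)⁻¹ ≤ 1 + N * a + C * a ^ 2 := by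
  induction N with
  | zero => exact ⟨0, le_rfl, fun a _ => by simp⟩
  | succ k ih =>
    obtain ⟨C, hC, h⟩ := ih
    refine ⟨2 * (2 + k + C) + C, by positivity, fun a ha => ?_⟩
    have h1 := h a ha
    obtain ⟨ha1, ha2⟩ := abs_le.1 ha
    have hpos : 0 < 1 - a := by linarith
    have hk : (0 : ℝ) ≤ k := Nat.cast_nonneg k
    have h2 : (1 - a)⁻¹ ≤ 1 + a + 2 * a ^ 2 := by
      rw [inv_le_iff_one_le_mul₀ hpos]
      nlinarith [mul_nonneg (sq_nonneg a) (by linarith : (0 : ℝ) ≤ 1 - 2 * a)]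
    have h3 : 0 ≤ 1 + k * a + C * a ^ 2 := le_trans (by positivity) h1
    rw [pow_succ, mul_inv]
    calc ((1 - a) ^ k)⁻¹ * (1 - a)⁻¹
        ≤ (1 + k * a + C * a ^ 2) * (1 + a + 2 * a ^ 2) := by gcongr
      _ ≤ _ := by
        push_cast
        have e : (1 + (↑k + 1) * a + (2 * (2 + ↑k + C) + C) * a ^ 2)
            - (1 + k * a + C * a ^ 2) * (1 + a + 2 * a ^ 2)
            = a ^ 2 * (2 + k * (1 - 2 * a) + C * (1 - a) + C * (1 - 2 * a ^ 2)) := by ring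
        have : 0 ≤ a ^ 2 * (2 + k * (1 - 2 * a) + C * (1 - a) + C * (1 - 2 * a ^ 2)) := by
          have : a ^ 2 ≤ 1 / 4 := by nlinarith
          have h4 := mul_nonneg hk (by linarith : (0 : ℝ) ≤ 1 - 2 * a)
          have h5 := mul_nonneg hC hpos.le
          have h6 := mul_nonneg hC (by linarith : (0 : ℝ) ≤ 1 - 2 * a ^ 2)
          exact mul_nonneg (sq_nonneg a) (by linarith)
        linarith

/-! ### Pointwise bounds for the antisymmetric kernel -/

lemma norm_reflFirst_sub_sq (n : ℕ) [NeZero n] (x y : Euc n) :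
    ‖reflFirst n x - y‖ ^ 2 = ‖x - y‖ ^ 2 + 4 * x 0 * y 0 := by
  have : reflFirst n x - y = (x - y) - (2 * x 0) • EuclideanSpace.single 0 1 := by
    unfold reflFirst; abel
  rw [this, norm_sub_sq_real, inner_smul_right, norm_smul]
  simp [EuclideanSpace.inner_single_right, mul_pow]
  ring

lemma norm_le_norm_reflFirst_sub (n : ℕ) [NeZero n] {x y : Euc n} (hx : 0 < x 0) (hy : 0 < y 0) :
    ‖x - y‖ ≤ ‖reflFirst n x - y‖ := by
  have := norm_reflFirst_sub_sq n x y
  have h2 := mul_pos hx hy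
  exact (sq_le_sq₀ (norm_nonneg _) (norm_nonneg _)).1 (by nlinarith)

lemma aKernel_le (n : ℕ) [NeZero n] (s : ℝ) (x y : Euc n) :
    aKernel n s x y ≤ ‖x - y‖ ^ (-((n : ℝ) + 2 * s)) := by
  unfold aKernel
  have := Real.rpow_nonneg (norm_nonneg (reflFirst n x - y)) (-((n : ℝ) + 2 * s))
  linarith

lemma aKernel_nonneg (n : ℕ) [NeZero n] {s : ℝ} (hs : 0 < s) {x y : Euc n}
    (hx : 0 < x 0) (hy : 0 < y 0) (hxy : 0 < ‖x - y‖) : 0 ≤ aKernel n s x y := by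
  unfold aKernel
  have := Real.rpow_le_rpow_of_nonpos hxy (norm_le_norm_reflFirst_sub n hx hy)
    (z := -((n : ℝ) + 2 * s)) (by have := Nat.cast_nonneg (α := ℝ) n; linarith)
  linarith

/-- Convexity of `t ↦ t^{-q}`, in the form of the tangent line inequality. -/
lemma rpow_neg_sub_le {t b q : ℝ} (ht : 0 < t) (hb : 0 ≤ b) (hq : 0 ≤ q) :
    t ^ (-q) - (t + b) ^ (-q) ≤ q * b * t ^ (-q - 1) := by
  have hz : 0 ≤ b / t := by positivity
  have h1 : (t + b) = t * (1 + b / t) := by field_simp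
  have h2 : 1 - q * (b / t) ≤ (1 + b / t) ^ (-q) := by
    rw [Real.rpow_def_of_pos (by positivity)]
    have h3 := Real.log_le_sub_one_of_pos (show 0 < 1 + b / t by positivity)
    have h4 := Real.add_one_le_exp (Real.log (1 + b / t) * -q)
    nlinarith
  rw [h1, Real.mul_rpow ht.le (by positivity), Real.rpow_sub ht, Real.rpow_one]
  have h5 : 0 < t ^ (-q) := Real.rpow_pos_of_pos ht _
  have h6 : q * b * (t ^ (-q) / t) = t ^ (-q) * (q * (b / t)) := by field_simp
  rw [h6]
  nlinarith

lemma aKernel_le_mul (n : ℕ) [NeZero n] {s : ℝ} (hs : 0 < s) {x y : Euc n}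
    (hx : 0 < x 0) (hy : 0 < y 0) (hxy : 0 < ‖x - y‖) :
    aKernel n s x y ≤
      2 * ((n : ℝ) + 2 * s) * x 0 * y 0 * ‖x - y‖ ^ (-((n : ℝ) + 2 * s + 2)) := by
  have key : ∀ z : ℝ, 0 ≤ z → ∀ e : ℝ, z ^ e = (z ^ 2) ^ (e / 2) := fun z hz e => by
    rw [← Real.rpow_natCast, ← Real.rpow_mul hz]; congr 1; push_cast; ring
  unfold aKernel
  rw [key _ (norm_nonneg (x - y)), key _ (norm_nonneg (reflFirst n x - y)),
    key _ (norm_nonneg (x - y)), norm_reflFirst_sub_sq]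
  have hn := Nat.cast_nonneg (α := ℝ) n
  have := rpow_neg_sub_le (t := ‖x - y‖ ^ 2) (b := 4 * x 0 * y 0) (q := (n + 2 * s) / 2)
    (by positivity) (by positivity) (by positivity)
  rw [show -((n : ℝ) + 2 * s) / 2 = -((n + 2 * s) / 2) by ring,
    show -((n : ℝ) + 2 * s + 2) / 2 = -((n + 2 * s) / 2) - 1 by ring]
  linarith

lemma abs_coord_le_norm (n : ℕ) (x : Euc n) (i : Fin n) : |x i| ≤ ‖x‖ := by
  simpa using PiLp.norm_apply_le x i

lemma near_e1 (n : ℕ) [NeZero n] {x : Euc n} (hx : x ∈ ball (e1 n) (1 / 2)) :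
    1 / 2 < x 0 ∧ x 0 < 3 / 2 ∧ ‖x‖ < 3 / 2 := by
  rw [mem_ball, dist_eq_norm] at hx
  have h := abs_coord_le_norm n (x - e1 n) 0
  have h1 : (x - e1 n) 0 = x 0 - 1 := by simp [e1]
  rw [h1] at h
  have h2 := abs_lt.1 (h.trans_lt hx)
  have h3 : ‖x‖ ≤ ‖x - e1 n‖ + ‖e1 n‖ := by simpa using norm_add_le (x - e1 n) (e1 n)
  have h4 : ‖e1 n‖ = 1 := by simp [e1]
  exact ⟨by linarith, by linarith, by linarith⟩

/-- Away from the diagonal the kernel is controlled by the weight defining the norm of `𝒜ₛ`. -/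
lemma aKernel_tail (n : ℕ) [NeZero n] {s : ℝ} (hs : 0 < s) :
    ∃ C : ℝ, 0 < C ∧ ∀ (x y : Euc n) (r : ℝ), x ∈ ball (e1 n) (1 / 2) → 0 < y 0 → 0 < r → r ≤ 1 →
      r ≤ ‖x - y‖ → aKernel n s x y ≤
        C * r ^ (-((n : ℝ) + 2 * s + 2)) * (y 0 / (1 + ‖y‖ ^ ((n : ℝ) + 2 * s + 2))) := by
  have hn := Nat.cast_nonneg (α := ℝ) n
  set m := (n : ℝ) + 2 * s + 2 with hm
  have hm0 : 0 ≤ m := by positivity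
  refine ⟨3 * ((n : ℝ) + 2 * s) * (1 + (3 : ℝ) ^ m), by positivity, ?_⟩
  intro x y r hx hy hr hr1 hxy
  obtain ⟨hx1, hx2, hx3⟩ := near_e1 n hx
  have hpos : 0 < ‖x - y‖ := hr.trans_le hxy
  refine (aKernel_le_mul n hs (by linarith) hy hpos).trans ?_
  rw [← hm]
  have hD : 0 < 1 + ‖y‖ ^ m := by positivity
  have hq : 1 ≤ ‖x - y‖ / r := (one_le_div hr).2 hxy
  have hq' : ‖x - y‖ ≤ ‖x - y‖ / r := le_div_self hpos.le hr hr1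
  have hy3 : ‖y‖ ≤ 3 * (‖x - y‖ / r) := by
    have : ‖y‖ ≤ ‖x‖ + ‖x - y‖ := by
      simpa using norm_sub_le x (x - y)
    linarith
  have h1 : 1 + ‖y‖ ^ m ≤ (1 + 3 ^ m) * (‖x - y‖ / r) ^ m := by
    have h2 : ‖y‖ ^ m ≤ 3 ^ m * (‖x - y‖ / r) ^ m := by
      rw [← Real.mul_rpow (by norm_num) (by positivity)]
      exact Real.rpow_le_rpow (norm_nonneg _) hy3 hm0
    have h3 := Real.one_le_rpow hq hm0
    linarith
  have h4 : ‖x - y‖ ^ (-m) ≤ (1 + 3 ^ m) * r ^ (-m) * (1 / (1 + ‖y‖ ^ m)) := by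
    rw [mul_one_div, le_div_iff₀ hD]
    rw [Real.div_rpow hpos.le hr.le] at h1
    rw [Real.rpow_neg hpos.le, Real.rpow_neg hr.le]
    have hA : 0 < ‖x - y‖ ^ m := by positivity
    have hB : 0 < r ^ m := by positivity
    calc (‖x - y‖ ^ m)⁻¹ * (1 + ‖y‖ ^ m)
        ≤ (‖x - y‖ ^ m)⁻¹ * ((1 + 3 ^ m) * (‖x - y‖ ^ m / r ^ m)) := by gcongr
      _ = _ := by field_simp
  calc 2 * ((n : ℝ) + 2 * s) * x 0 * y 0 * ‖x - y‖ ^ (-m)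
      ≤ 2 * ((n : ℝ) + 2 * s) * (3 / 2) * y 0 *
          ((1 + 3 ^ m) * r ^ (-m) * (1 / (1 + ‖y‖ ^ m))) := by gcongr
    _ = _ := by ring

/-! ### Integrals of the singular kernel -/

/-- The kernel `|h|^{2-n-2s}` is integrable near the origin, with the scaling `r^{2-2s}`. -/
lemma radial_integral (n : ℕ) [NeZero n] {s : ℝ} (hs1 : s < 1) :
    ∃ J : ℝ, 0 ≤ J ∧ ∀ (x : Euc n) (r : ℝ), 0 < r →
      IntegrableOn (fun y => ‖x - y‖ ^ (2 - ((n : ℝ) + 2 * s))) (ball x r) ∧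
      ∫ y in ball x r, ‖x - y‖ ^ (2 - ((n : ℝ) + 2 * s)) = J * r ^ (2 - 2 * s) := by
  set e := 2 - ((n : ℝ) + 2 * s) with he
  have hn1 : 1 ≤ n := Nat.one_le_iff_ne_zero.2 (NeZero.ne n)
  refine ⟨∫ z in ball (0 : Euc n) 1, ‖z‖ ^ e, by positivity, fun x r hr => ?_⟩
  have hpre : (fun y : Euc n => x - y) ⁻¹' (ball 0 r) = ball x r := by
    ext y; simp [dist_eq_norm, norm_sub_rev]
  have hmp : MeasurePreserving (fun y : Euc n => x - y) volume volume :=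
    Measure.measurePreserving_sub_left volume x
  have hemb : MeasurableEmbedding (fun y : Euc n => x - y) :=
    (MeasurableEquiv.subLeft x).measurableEmbedding
  have hint : IntegrableOn (fun z : Euc n => ‖z‖ ^ e) (ball 0 r) := by
    rw [integrableOn_fun_norm_addHaar volume (f := fun t : ℝ => t ^ e)]
    have h0 : IntegrableOn (fun t : ℝ => t ^ (1 - 2 * s)) (Set.Ioo 0 r) :=
      (intervalIntegral.integrableOn_Ioo_rpow_iff hr).2 (by linarith)
    refine h0.congr_fun (fun t ht => ?_) measurableSet_Ioo
    simp only [finrank_euclideanSpace, Fintype.card_fin, smul_eq_mul]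
    rw [← Real.rpow_natCast, ← Real.rpow_add ht.1, Nat.cast_sub hn1, he]
    congr 1; push_cast; ring
  constructor
  · have := (hmp.integrableOn_comp_preimage hemb (f := fun z : Euc n => ‖z‖ ^ e)
      (s := ball 0 r)).2 hint
    rw [hpre] at this
    exact this
  · have h1 := hmp.setIntegral_preimage_emb hemb (fun z : Euc n => ‖z‖ ^ e) (ball 0 r)
    rw [hpre] at h1
    rw [h1]
    have h2 := Measure.setIntegral_comp_smul_of_pos (volume : Measure (Euc n))
      (fun z : Euc n => ‖z‖ ^ e) (ball 0 1) hr
    rw [smul_unitBall_of_pos hr] at h2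
    have h3 : ∀ z : Euc n, ‖r • z‖ ^ e = r ^ e * ‖z‖ ^ e := fun z => by
      rw [norm_smul, Real.norm_of_nonneg hr.le, Real.mul_rpow hr.le (norm_nonneg _)]
    simp only [h3, finrank_euclideanSpace, Fintype.card_fin, smul_eq_mul] at h2
    rw [integral_const_mul, eq_inv_mul_iff_mul_eq₀ (by positivity)] at h2
    rw [← h2, ← mul_assoc, ← Real.rpow_natCast, ← Real.rpow_add hr, he, mul_comm]
    congr 2; ring

/-- The odd part of the expansion integrates to zero over a centred annulus. -/
lemma odd_integral (n : ℕ) (x w : Euc n) (r ε p : ℝ) :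
    ∫ y in ball x r \ ball x ε, ‖x - y‖ ^ p * inner ℝ w (y - x) = 0 := by
  have hm : MeasurableSet (ball x r \ ball x ε) := measurableSet_ball.diff measurableSet_ball
  rw [← integral_indicator hm]
  set F := (ball x r \ ball x ε).indicator (fun y => ‖x - y‖ ^ p * inner ℝ w (y - x)) with hF
  have h1 : ∫ y, F ((2 : ℝ) • x - y) = ∫ y, F y := integral_sub_left_eq_self F volume _
  have h2 : ∀ y, F ((2 : ℝ) • x - y) = - F y := fun y => by
    have e1 : x - ((2 : ℝ) • x - y) = -(x - y) := by module
    have e2 : ((2 : ℝ) • x - y) - x = -(y - x) := by module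
    have e3 : ((2 : ℝ) • x - y) ∈ ball x r \ ball x ε ↔ y ∈ ball x r \ ball x ε := by
      simp only [Set.mem_sdiff, mem_ball, dist_eq_norm, e2, norm_neg]
    by_cases hy : y ∈ ball x r \ ball x ε
    · rw [hF, Set.indicator_of_mem (e3.2 hy), Set.indicator_of_mem hy, e1, e2, norm_neg,
        inner_neg_right, mul_neg]
    · rw [hF, Set.indicator_of_notMem (fun h => hy (e3.1 h)), Set.indicator_of_notMem hy, neg_zero]
  simp only [h2, integral_neg] at h1
  linarith

lemma measurableSet_halfSpace (n : ℕ) [NeZero n] : MeasurableSet (halfSpace n) := by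
  have : Continuous fun x : Euc n => x 0 := by fun_prop
  exact (isOpen_lt continuous_const this).measurableSet

lemma measurable_aKernel (n : ℕ) [NeZero n] (s : ℝ) (x : Euc n) : Measurable (aKernel n s x) := by
  unfold aKernel
  fun_prop

lemma aKernel_integrableOn (n : ℕ) [NeZero n] {s : ℝ} (hs : 0 < s) {x : Euc n} (hx : 0 < x 0)
    {r : ℝ} (hr : 0 < r) : IntegrableOn (aKernel n s x) (halfSpace n \ ball x r) := by
  have h0 : Integrable (fun y : Euc n => (1 + ‖y‖) ^ (-((n : ℝ) + 2 * s))) :=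
    integrable_one_add_norm (by simp; linarith)
  have h1 := (h0.comp_sub_left x).const_mul ((1 + 1 / r) ^ ((n : ℝ) + 2 * s))
  refine h1.integrableOn.mono' (measurable_aKernel n s x).aestronglyMeasurable ?_
  refine (ae_restrict_iff' ((measurableSet_halfSpace n).diff measurableSet_ball)).2
    (ae_of_all _ fun y hy => ?_)
  have hxy : r ≤ ‖x - y‖ := by
    have := hy.2; rw [mem_ball, dist_comm, dist_eq_norm] at this; exact not_lt.1 this
  have hpos := hr.trans_le hxy
  rw [Real.norm_of_nonneg (aKernel_nonneg n hs hx hy.1 hpos)]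
  refine (aKernel_le n s x y).trans ?_
  have hn := Nat.cast_nonneg (α := ℝ) n
  have h2 : 1 + ‖x - y‖ ≤ (1 + 1 / r) * ‖x - y‖ := by
    have : 1 ≤ 1 / r * ‖x - y‖ := by rw [one_div_mul_eq_div]; exact (one_le_div hr).2 hxy
    linarith
  have h3 := Real.rpow_le_rpow (by positivity) h2 (show 0 ≤ (n : ℝ) + 2 * s by positivity)
  rw [Real.mul_rpow (by positivity) hpos.le] at h3
  rw [Real.rpow_neg hpos.le, Real.rpow_neg (by positivity), ← div_eq_mul_inv,
    inv_le_comm₀ (by positivity) (by positivity), inv_div, div_le_iff₀ (by positivity)]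
  linarith

/-! ### Lower bound for the truncated operator at a touching point -/

lemma volume_ball_euc (n : ℕ) [NeZero n] (x : Euc n) {r : ℝ} (hr : 0 ≤ r) :
    volume.real (ball x r) = r ^ n * volume.real (ball (0 : Euc n) 1) := by
  rw [measureReal_def, Measure.addHaar_ball volume x hr, ENNReal.toReal_mul,
    ENNReal.toReal_ofReal (by positivity)]
  simp [measureReal_def]

lemma volume_unitBall_pos (n : ℕ) : 0 < volume.real (ball (0 : Euc n) 1) :=
  ENNReal.toReal_pos (measure_ball_pos _ _ one_pos).ne' measure_ball_lt_top.ne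

lemma anorm_nonneg (n : ℕ) [NeZero n] (s : ℝ) (u : Euc n → ℝ) : 0 ≤ ANorm n s u := by
  refine setIntegral_nonneg (measurableSet_halfSpace n) fun x hx => ?_
  have : 0 < x 0 := hx
  positivity

lemma aKernel_mul_integrableOn (n : ℕ) [NeZero n] {s : ℝ} (hs : 0 < s) {u : Euc n → ℝ}
    (hu : MemA n s u) {x : Euc n} (hx : x ∈ ball (e1 n) (1 / 2)) {r : ℝ} (hr : 0 < r)
    (hr1 : r ≤ 1) :
    IntegrableOn (fun y => aKernel n s x y * u y) (halfSpace n \ ball x r) := by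
  obtain ⟨C, hC, hA⟩ := aKernel_tail n hs
  have hx0 : 0 < x 0 := by linarith [(near_e1 n hx).1]
  have h1 := (hu.2.2.mono_set (t := halfSpace n) (s := halfSpace n \ ball x r)
    Set.sdiff_subset).const_mul (C * r ^ (-((n : ℝ) + 2 * s + 2)))
  refine h1.mono' ((measurable_aKernel n s x).aestronglyMeasurable.mul
    hu.2.1.aestronglyMeasurable.restrict) ?_
  refine (ae_restrict_iff' ((measurableSet_halfSpace n).diff measurableSet_ball)).2
    (ae_of_all _ fun y hy => ?_)
  have hxy : r ≤ ‖x - y‖ := by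
    have := hy.2; rw [mem_ball, dist_comm, dist_eq_norm] at this; exact not_lt.1 this
  rw [norm_mul, Real.norm_of_nonneg (aKernel_nonneg n hs hx0 hy.1 (hr.trans_le hxy)),
    Real.norm_eq_abs]
  calc aKernel n s x y * |u y| ≤ _ :=
        mul_le_mul_of_nonneg_right (hA x y r hx hy.1 hr hr1 hxy) (abs_nonneg _)
    _ = _ := by ring

/-- The far part of the operator is bounded below by a multiple of `‖u‖_{𝒜ₛ}`. -/
lemma far_lower_bound (n : ℕ) [NeZero n] {s : ℝ} (hs : 0 < s) :
    ∃ C : ℝ, 0 < C ∧ ∀ (u : Euc n → ℝ) (x : Euc n) (r : ℝ), MemA n s u →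
      x ∈ ball (e1 n) (1 / 2) → 0 < r → r ≤ 1 → 0 ≤ u x →
      -(C * r ^ (-((n : ℝ) + 2 * s + 2)) * ANorm n s u) ≤
        ∫ y in halfSpace n \ ball x r, aKernel n s x y * (u x - u y) := by
  obtain ⟨C, hC, hA⟩ := aKernel_tail n hs
  refine ⟨C, hC, fun u x r hu hx hr hr1 hux => ?_⟩
  have hx0 : 0 < x 0 := by linarith [(near_e1 n hx).1]
  have hms := (measurableSet_halfSpace n).diff (measurableSet_ball (x := x) (ε := r))
  have hsub := hu.2.2.mono_set (t := halfSpace n) (s := halfSpace n \ ball x r)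
    Set.sdiff_subset
  have hmono : ∫ y in halfSpace n \ ball x r,
      y 0 * |u y| / (1 + ‖y‖ ^ ((n : ℝ) + 2 * s + 2)) ≤ ANorm n s u := by
    refine setIntegral_mono_set hu.2.2 ?_ (Set.sdiff_subset.eventuallyLE)
    refine (ae_restrict_iff' (measurableSet_halfSpace n)).2 (ae_of_all _ fun y hy => ?_)
    have : 0 < y 0 := hy
    simp only [Pi.zero_apply]
    positivity
  have hint : IntegrableOn (fun y => aKernel n s x y * (u x - u y)) (halfSpace n \ ball x r) := by
    simp only [mul_sub]
    exact ((aKernel_integrableOn n hs hx0 hr).mul_const _).sub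
      (aKernel_mul_integrableOn n hs hu hx hr hr1)
  calc -(C * r ^ (-((n : ℝ) + 2 * s + 2)) * ANorm n s u)
      ≤ -(C * r ^ (-((n : ℝ) + 2 * s + 2)) * ∫ y in halfSpace n \ ball x r,
          y 0 * |u y| / (1 + ‖y‖ ^ ((n : ℝ) + 2 * s + 2))) := by gcongr
    _ = ∫ y in halfSpace n \ ball x r, -(C * r ^ (-((n : ℝ) + 2 * s + 2)) *
          (y 0 * |u y| / (1 + ‖y‖ ^ ((n : ℝ) + 2 * s + 2)))) := by
        rw [integral_neg, integral_const_mul]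
    _ ≤ _ := by
        refine setIntegral_mono_on (hsub.const_mul _).neg hint hms fun y hy => ?_
        have hxy : r ≤ ‖x - y‖ := by
          have := hy.2; rw [mem_ball, dist_comm, dist_eq_norm] at this; exact not_lt.1 this
        have h0 := aKernel_nonneg n hs hx0 hy.1 (hr.trans_le hxy)
        have h1 := mul_le_mul_of_nonneg_right (hA x y r hx hy.1 hr hr1 hxy) (abs_nonneg (u y))
        have h2 : -(aKernel n s x y * |u y|) ≤ aKernel n s x y * (u x - u y) := by
          have := mul_le_mul_of_nonneg_left
            (show -|u y| ≤ u x - u y by linarith [le_abs_self (u y)]) h0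
          linarith
        have h3 : C * r ^ (-((n : ℝ) + 2 * s + 2)) *
            (y 0 * |u y| / (1 + ‖y‖ ^ ((n : ℝ) + 2 * s + 2))) =
            C * r ^ (-((n : ℝ) + 2 * s + 2)) *
              (y 0 / (1 + ‖y‖ ^ ((n : ℝ) + 2 * s + 2))) * |u y| := by ring
        linarith

/-- Bounds on the kernel near the diagonal: the reflected singularity stays at distance at least
`1/2`, hence the singular part dominates. -/
lemma aKernel_near (n : ℕ) [NeZero n] {s : ℝ} (hs : 0 < s) {x y : Euc n} {r : ℝ}
    (hx : x ∈ ball (e1 n) (1 / 2)) (hr : r ≤ 1 / 4) (hy : y ∈ ball x r) (hxy : 0 < ‖x - y‖) :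
    1 / 4 < y 0 ∧ ‖y‖ ≤ 2 ∧ ‖reflFirst n x - y‖ ^ (-((n : ℝ) + 2 * s)) ≤ 2 ^ ((n : ℝ) + 2 * s) ∧
      r ^ (-((n : ℝ) + 2 * s)) / 2 ≤ aKernel n s x y := by
  obtain ⟨hx1, hx2, hx3⟩ := near_e1 n hx
  rw [mem_ball, dist_comm, dist_eq_norm] at hy
  have hr0 : 0 < r := hxy.trans hy
  have hn : (1 : ℝ) ≤ n := by exact_mod_cast Nat.one_le_iff_ne_zero.2 (NeZero.ne n)
  have h := abs_coord_le_norm n (x - y) 0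
  have hy0 : 1 / 4 < y 0 := by
    have h1 : (x - y) 0 = x 0 - y 0 := by simp
    rw [h1] at h
    have := abs_le.1 h
    linarith
  have hyn : ‖y‖ ≤ 2 := by
    have : ‖y‖ ≤ ‖x‖ + ‖x - y‖ := by simpa using norm_sub_le x (x - y)
    linarith
  have hrefl : 1 / 2 ≤ ‖reflFirst n x - y‖ := by
    refine (sq_le_sq₀ (by norm_num) (norm_nonneg _)).1 ?_
    rw [norm_reflFirst_sub_sq]
    nlinarith [sq_nonneg ‖x - y‖]
  have hp : 0 ≤ (n : ℝ) + 2 * s := by positivity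
  have h2 : ‖reflFirst n x - y‖ ^ (-((n : ℝ) + 2 * s)) ≤ 2 ^ ((n : ℝ) + 2 * s) := by
    refine (Real.rpow_le_rpow_of_nonpos (by norm_num) hrefl (by linarith)).trans ?_
    rw [one_div, Real.inv_rpow (by norm_num), Real.rpow_neg (by norm_num), inv_inv]
  refine ⟨hy0, hyn, h2, ?_⟩
  have h3 : r ^ (-((n : ℝ) + 2 * s)) ≤ ‖x - y‖ ^ (-((n : ℝ) + 2 * s)) :=
    Real.rpow_le_rpow_of_nonpos hxy hy.le (by linarith)
  have h4 : 2 * (2 : ℝ) ^ ((n : ℝ) + 2 * s) ≤ r ^ (-((n : ℝ) + 2 * s)) := by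
    calc 2 * (2 : ℝ) ^ ((n : ℝ) + 2 * s)
        ≤ 2 ^ ((n : ℝ) + 2 * s) * 2 ^ ((n : ℝ) + 2 * s) := by
          gcongr
          exact Real.self_le_rpow_of_one_le (by norm_num) (by linarith)
      _ = (1 / 4) ^ (-((n : ℝ) + 2 * s)) := by
          rw [← Real.mul_rpow (by norm_num) (by norm_num), one_div, Real.inv_rpow (by norm_num),
            Real.rpow_neg (by norm_num), inv_inv]
          norm_num
      _ ≤ _ := Real.rpow_le_rpow_of_nonpos hr0 hr (by linarith)
  unfold aKernel
  linarith

/-- The near part of the operator. If `u` is touched from above at `x` by a quadratic with gradient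
`u(x) w`, and most of `B_r(x)` lies in `{u ≤ u(x)/2}`, then the truncated integral over `B_r(x)` is
at least `u(x) (c r^{-2s} - J B r^{2-2s} - C)`. -/
lemma near_lower_bound (n : ℕ) [NeZero n] {s : ℝ} (hs : 0 < s) (hs1 : s < 1) :
    ∃ J : ℝ, 0 ≤ J ∧ ∀ (u : Euc n → ℝ) (x w : Euc n) (r ε B : ℝ), MemA n s u →
      x ∈ ball (e1 n) (1 / 2) → 0 < r → r ≤ 1 / 4 → 0 < ε → ε ≤ r / 4 → 0 ≤ B → 0 < u x →
      ‖w‖ * r ≤ 1 / 4 →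
      (∀ y ∈ ball x r, u y ≤ u x * (1 + inner ℝ w (y - x) + B * ‖x - y‖ ^ 2)) →
      MeasurableSet {y ∈ ball x r | u x / 2 < u y} →
      volume.real {y ∈ ball x r | u x / 2 < u y} ≤ volume.real (ball x r) / 4 →
      u x * (volume.real (ball (0 : Euc n) 1) / 16 * r ^ (-(2 * s)) - B * (J * r ^ (2 - 2 * s))
          - 2 ^ ((n : ℝ) + 2 * s) * volume.real (ball (0 : Euc n) 1)) ≤
        ∫ y in ball x r \ ball x ε, aKernel n s x y * (u x - u y) := by
  obtain ⟨J, hJ, hrad⟩ := radial_integral n hs1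
  refine ⟨J, hJ, ?_⟩
  intro u x w r ε B hu hx hr hr4 hε hεr hB hux hw hq hbm hbv
  obtain ⟨hri, hrv⟩ := hrad x r hr
  set p := (n : ℝ) + 2 * s with hp
  set ω := volume.real (ball (0 : Euc n) 1) with hω
  set bad := {y ∈ ball x r | u x / 2 < u y} with hbad
  have hx0 : 0 < x 0 := by linarith [(near_e1 n hx).1]
  set S := ball x r \ ball x ε with hS
  have hSm : MeasurableSet S := measurableSet_ball.diff measurableSet_ball
  have hSfin : volume S < ⊤ := (measure_mono Set.sdiff_subset).trans_lt measure_ball_lt_top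
  have hn1 : 1 ≤ n := Nat.one_le_iff_ne_zero.2 (NeZero.ne n)
  have hp0 : 0 ≤ p := by positivity
  have hpt : ∀ y ∈ S, ε ≤ ‖x - y‖ ∧ ‖x - y‖ < r := fun y hy => by
    have h1 := hy.1; have h2 := hy.2
    rw [mem_ball, dist_comm, dist_eq_norm] at h1 h2
    exact ⟨not_lt.1 h2, h1⟩
  have hwy : ∀ y ∈ S, |inner ℝ w (y - x)| ≤ 1 / 4 := fun y hy => by
    refine (abs_real_inner_le_norm _ _).trans (le_trans ?_ hw)
    rw [norm_sub_rev]
    exact mul_le_mul_of_nonneg_left (hpt y hy).2.le (norm_nonneg _)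
  have hSH : S ⊆ halfSpace n \ ball x ε := fun y hy => by
    refine ⟨?_, hy.2⟩
    have := (aKernel_near n hs hx hr4 hy.1 (hε.trans_le (hpt y hy).1)).1
    show 0 < y 0
    linarith
  have hint : IntegrableOn (fun y => aKernel n s x y * (u x - u y)) S := by
    refine IntegrableOn.mono_set ?_ hSH
    simp only [mul_sub]
    exact ((aKernel_integrableOn n hs hx0 hε).mul_const _).sub
      (aKernel_mul_integrableOn n hs hu hx hε (by linarith))
  -- the four pieces of the minorant
  have hi1 : IntegrableOn (fun y => ‖x - y‖ ^ (-p) * inner ℝ w (y - x)) S := by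
    refine Measure.integrableOn_of_bounded (M := ε ^ (-p) * (1 / 4)) hSfin.ne
      (by fun_prop) ?_
    refine (ae_restrict_iff' hSm).2 (ae_of_all _ fun y hy => ?_)
    rw [norm_mul, Real.norm_of_nonneg (by positivity), Real.norm_eq_abs]
    have := Real.rpow_le_rpow_of_nonpos hε (hpt y hy).1 (z := -p) (by linarith)
    gcongr
    exact hwy y hy
  have hi2 : IntegrableOn (fun _ : Euc n => (2 : ℝ) ^ p / 4) S := integrableOn_const hSfin.ne
  have hi3 : IntegrableOn (fun y => ‖x - y‖ ^ (2 - p)) S := hri.mono_set Set.sdiff_subset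
  have hi4 : IntegrableOn (badᶜ.indicator (fun _ : Euc n => r ^ (-p) / 8)) S :=
    (integrableOn_const (C := r ^ (-p) / 8) hSfin.ne).indicator hbm.compl
  have hI : u x * (∫ y in S, (badᶜ.indicator (fun _ : Euc n => r ^ (-p) / 8) y
      - ‖x - y‖ ^ (-p) * inner ℝ w (y - x) - B * ‖x - y‖ ^ (2 - p) - 2 ^ p / 4)) ≤
      ∫ y in S, aKernel n s x y * (u x - u y) := by
    rw [← integral_const_mul]
    refine setIntegral_mono_on
      ((((hi4.sub hi1).sub (hi3.const_mul B)).sub hi2).const_mul _) hint hSm fun y hy => ?_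
    obtain ⟨hy1, hy2⟩ := hpt y hy
    have hxy := hε.trans_le hy1
    obtain ⟨hy0, -, hK2, hAlow⟩ := aKernel_near n hs hx hr4 hy.1 hxy
    rw [← hp] at hK2 hAlow
    have hA0 := aKernel_nonneg n hs hx0 (show 0 < y 0 by linarith) hxy
    have hAle := aKernel_le n s x y
    have hAeq : aKernel n s x y = ‖x - y‖ ^ (-p) - ‖reflFirst n x - y‖ ^ (-p) := rfl
    rw [← hp] at hAle
    have hK20 : 0 ≤ ‖reflFirst n x - y‖ ^ (-p) := by positivity
    have hq1 := hq y hy.1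
    obtain ⟨hi1, hi2⟩ := abs_le.1 (hwy y hy)
    set A := aKernel n s x y
    set i := inner ℝ w (y - x)
    have hsq : ‖x - y‖ ^ (2 - p) = ‖x - y‖ ^ (-p) * ‖x - y‖ ^ 2 := by
      rw [← Real.rpow_natCast, ← Real.rpow_add hxy]; congr 1; push_cast; ring
    -- replacing the kernel by its singular part in the linear term costs at most `2 ^ p / 4`
    have hlin : A * i ≤ ‖x - y‖ ^ (-p) * i + 2 ^ p / 4 := by
      have : -(‖reflFirst n x - y‖ ^ (-p) * i) ≤ 2 ^ p * (1 / 4) := by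
        calc -(‖reflFirst n x - y‖ ^ (-p) * i) = ‖reflFirst n x - y‖ ^ (-p) * (-i) := by ring
          _ ≤ ‖reflFirst n x - y‖ ^ (-p) * (1 / 4) := by gcongr; linarith
          _ ≤ _ := by gcongr
      rw [hAeq]; linarith
    have hquad : A * ‖x - y‖ ^ 2 ≤ ‖x - y‖ ^ (2 - p) := by
      rw [hsq]; gcongr
    have hBquad := mul_le_mul_of_nonneg_left hquad hB
    by_cases hyb : y ∈ bad
    · have h0 : badᶜ.indicator (fun _ : Euc n => r ^ (-p) / 8) y = 0 :=
        Set.indicator_of_notMem (by simpa using hyb) _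
      rw [h0]
      calc u x * (0 - ‖x - y‖ ^ (-p) * i - B * ‖x - y‖ ^ (2 - p) - 2 ^ p / 4)
          ≤ u x * (-(A * i) - B * (A * ‖x - y‖ ^ 2))  := by gcongr u x * ?_; linarith
        _ = A * (u x - u x * (1 + i + B * ‖x - y‖ ^ 2)) := by ring
        _ ≤ _ := by gcongr
    · have h0 : badᶜ.indicator (fun _ : Euc n => r ^ (-p) / 8) y = r ^ (-p) / 8 :=
        Set.indicator_of_mem (by simpa using hyb) _
      have hhalf : u y ≤ u x / 2 := by
        by_contra hcon
        exact hyb ⟨hy.1, not_le.1 hcon⟩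
      rw [h0]
      have hBA : 0 ≤ B * (A * ‖x - y‖ ^ 2) := by positivity
      calc u x * (r ^ (-p) / 8 - ‖x - y‖ ^ (-p) * i - B * ‖x - y‖ ^ (2 - p) - 2 ^ p / 4)
          ≤ u x * (A * (1 / 4) - A * i) := by gcongr u x * ?_; linarith
        _ = A * (u x * (1 / 4 - i)) := by ring
        _ ≤ A * (u x * (1 / 2)) := by gcongr; linarith
        _ ≤ _ := by gcongr; linarith
  refine le_trans ?_ hI
  refine mul_le_mul_of_nonneg_left ?_ hux.le
  have hi5 : IntegrableOn (fun y => badᶜ.indicator (fun _ : Euc n => r ^ (-p) / 8) y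
      - ‖x - y‖ ^ (-p) * inner ℝ w (y - x)) S := hi4.sub hi1
  have hi6 : IntegrableOn (fun y => B * ‖x - y‖ ^ (2 - p)) S := hi3.const_mul B
  have hi7 : IntegrableOn (fun y => badᶜ.indicator (fun _ : Euc n => r ^ (-p) / 8) y
      - ‖x - y‖ ^ (-p) * inner ℝ w (y - x) - B * ‖x - y‖ ^ (2 - p)) S := hi5.sub hi6
  rw [integral_sub hi7 hi2, integral_sub hi5 hi6, integral_sub hi4 hi1, odd_integral,
    integral_const_mul, setIntegral_indicator hbm.compl, setIntegral_const, setIntegral_const]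
  simp only [smul_eq_mul, sub_zero]
  have hvr := volume_ball_euc n x hr.le
  have hve := volume_ball_euc n x hε.le
  rw [← hω] at hvr hve
  have hω0 : 0 < ω := volume_unitBall_pos n
  -- the good part of the annulus fills half of the ball
  have hgood : r ^ n * ω / 2 ≤ volume.real (S ∩ badᶜ) := by
    have hε4 : ε ^ n ≤ r ^ n / 4 := by
      calc ε ^ n ≤ (r / 4) ^ n := by gcongr
        _ = r ^ n * (1 / 4) ^ n := by rw [← mul_pow]; congr 1; ring
        _ ≤ r ^ n * (1 / 4) := by
            gcongr
            exact pow_le_of_le_one (by norm_num) (by norm_num) (NeZero.ne n)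
        _ = _ := by ring
    have hcov : ball x r ⊆ (S ∩ badᶜ) ∪ (bad ∪ ball x ε) := fun y hy => by
      by_cases h1 : y ∈ bad
      · exact Or.inr (Or.inl h1)
      · by_cases h2 : y ∈ ball x ε
        · exact Or.inr (Or.inr h2)
        · exact Or.inl ⟨⟨hy, h2⟩, h1⟩
    have hbadfin : volume bad ≠ ⊤ :=
      ((measure_mono (fun y hy => hy.1)).trans_lt (measure_ball_lt_top (x := x) (r := r))).ne
    have h1 := measureReal_mono (μ := volume) hcov
      (measure_union_lt_top ((measure_mono Set.inter_subset_left).trans_lt hSfin)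
        (measure_union_lt_top hbadfin.lt_top measure_ball_lt_top)).ne
    have h2 := measureReal_union_le (μ := volume) (S ∩ badᶜ) (bad ∪ ball x ε)
    have h3 := measureReal_union_le (μ := volume) bad (ball x ε)
    have h4 := mul_le_mul_of_nonneg_right hε4 hω0.le
    linarith
  have hg2 : ω / 16 * r ^ (-(2 * s)) ≤ volume.real (S ∩ badᶜ) * (r ^ (-p) / 8) := by
    calc ω / 16 * r ^ (-(2 * s)) = r ^ n * ω / 2 * (r ^ (-p) / 8) := by
          rw [show -(2 * s) = (n : ℝ) + -p by rw [hp]; ring, Real.rpow_add hr, Real.rpow_natCast]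
          ring
      _ ≤ _ := by gcongr
  have hg3 : ∫ y in S, ‖x - y‖ ^ (2 - p) ≤ J * r ^ (2 - 2 * s) := by
    rw [← hrv]
    exact setIntegral_mono_set hri (ae_of_all _ fun y => by simp only [Pi.zero_apply]; positivity)
      Set.sdiff_subset.eventuallyLE
  have hg4 : volume.real S ≤ ω := by
    refine (measureReal_mono Set.sdiff_subset measure_ball_lt_top.ne).trans ?_
    rw [hvr]
    exact mul_le_of_le_one_left hω0.le (pow_le_one₀ hr.le (by linarith))
  have hg5 := mul_le_mul_of_nonneg_left hg3 hB
  have hg6 : volume.real S * (2 ^ p / 4) ≤ 2 ^ p * ω := by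
    have h2p : (0 : ℝ) < 2 ^ p := by positivity
    calc volume.real S * (2 ^ p / 4) ≤ ω * (2 ^ p / 4) := by gcongr
      _ ≤ _ := by nlinarith
  linarith

/-! ### The touching argument -/

lemma cns_pos (n : ℕ) {s : ℝ} (hs : 0 < s) (hs1 : s < 1) : 0 < cns n s := by
  have hn := Nat.cast_nonneg (α := ℝ) n
  have h1 : 0 < Real.Gamma (((n : ℝ) + 2 * s) / 2) := Real.Gamma_pos_of_pos (by positivity)
  have h2 : 0 < Real.Gamma (1 - s) := Real.Gamma_pos_of_pos (by linarith)
  have h3 := Real.pi_pos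
  unfold cns
  positivity

/-- If `(R² - |y - e₁|²)^N u(y)` is maximal at `x`, then near `x` the function `u` lies below an
explicit quadratic polynomial. -/
lemma touching_quadratic (n : ℕ) [NeZero n] {N : ℕ} {Cq : ℝ} (hCq0 : 0 ≤ Cq)
    (hCq : ∀ a : ℝ, |a| ≤ 1 / 2 → ((1 - a) ^ N)⁻¹ ≤ 1 + N * a + Cq * a ^ 2)
    {R : ℝ} (hR0 : 0 < R) (hR : R ≤ 1 / 2) {u : Euc n → ℝ} {x : Euc n} (hux : 0 < u x)
    (hmax : ∀ y ∈ ball (e1 n) R,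
      u y * (R ^ 2 - ‖y - e1 n‖ ^ 2) ^ N ≤ u x * (R ^ 2 - ‖x - e1 n‖ ^ 2) ^ N)
    {g r : ℝ} (hg : g = R ^ 2 - ‖x - e1 n‖ ^ 2) (hg0 : 0 < g) (hrg : r ≤ g / 4) :
    ∀ y ∈ ball x r, y ∈ ball (e1 n) R ∧
      u y ≤ u x * (1 + inner ℝ ((2 * N / g) • (x - e1 n)) (y - x)
        + (N + 4 * Cq) / g ^ 2 * ‖x - y‖ ^ 2) := by
  intro y hy
  rw [mem_ball, dist_comm, dist_eq_norm] at hy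
  have hg1 : g ≤ 1 := by nlinarith [sq_nonneg ‖x - e1 n‖]
  have hxR : ‖x - e1 n‖ ≤ R := by
    refine (sq_le_sq₀ (norm_nonneg _) hR0.le).1 ?_
    linarith
  set h := y - x with hh
  have hnh : ‖x - y‖ = ‖h‖ := norm_sub_rev _ _
  rw [hnh] at hy ⊢
  set b := inner ℝ (x - e1 n) h with hb
  have hb1 : |b| ≤ ‖h‖ / 2 := by
    refine (abs_real_inner_le_norm _ _).trans ?_
    nlinarith [norm_nonneg h]
  have hexp : ‖y - e1 n‖ ^ 2 = ‖x - e1 n‖ ^ 2 + 2 * b + ‖h‖ ^ 2 := by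
    rw [show y - e1 n = (x - e1 n) + h by rw [hh]; abel, norm_add_sq_real]
  set a := (2 * b + ‖h‖ ^ 2) / g with ha
  have hgy : R ^ 2 - ‖y - e1 n‖ ^ 2 = g * (1 - a) := by
    rw [hexp, ha, mul_sub, mul_div_cancel₀ _ hg0.ne']; linarith
  have hh1 : ‖h‖ ≤ 1 := by linarith
  have hsqh : ‖h‖ ^ 2 ≤ ‖h‖ := by nlinarith [norm_nonneg h]
  have ha1 : |a| ≤ 2 * ‖h‖ / g := by
    rw [ha, abs_div, abs_of_pos hg0]
    gcongr
    obtain ⟨h1, h2⟩ := abs_le.1 hb1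
    exact abs_le.2 ⟨by nlinarith [sq_nonneg ‖h‖], by linarith⟩
  have ha2 : |a| ≤ 1 / 2 := by
    refine ha1.trans ?_
    rw [div_le_iff₀ hg0]; linarith
  have h1a : 0 < 1 - a := by linarith [(abs_le.1 ha2).2]
  have hyR : y ∈ ball (e1 n) R := by
    rw [mem_ball, dist_eq_norm]
    refine (sq_lt_sq₀ (norm_nonneg _) hR0.le).1 ?_
    have := mul_pos hg0 h1a
    linarith
  refine ⟨hyR, ?_⟩
  have h2 := hmax y hyR
  rw [hgy, ← hg, mul_pow] at h2
  have h3 : u y ≤ u x * ((1 - a) ^ N)⁻¹ := by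
    rw [← div_eq_mul_inv, le_div_iff₀ (by positivity)]
    have : 0 < g ^ N := by positivity
    nlinarith
  refine h3.trans (mul_le_mul_of_nonneg_left ((hCq a ha2).trans ?_) hux.le)
  have h4 : inner ℝ ((2 * N / g) • (x - e1 n)) h = 2 * N / g * b := by
    rw [inner_smul_left]; rfl
  rw [h4]
  have h5 : a ^ 2 ≤ 4 * ‖h‖ ^ 2 / g ^ 2 := by
    rw [← sq_abs]
    calc |a| ^ 2 ≤ (2 * ‖h‖ / g) ^ 2 := by gcongr
      _ = _ := by ring
  have h6 : (N : ℝ) * (‖h‖ ^ 2 / g) ≤ N * (‖h‖ ^ 2 / g ^ 2) := by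
    gcongr
    nlinarith
  have h7 : (N : ℝ) * a = 2 * N / g * b + N * (‖h‖ ^ 2 / g) := by rw [ha]; ring
  have h8 := mul_le_mul_of_nonneg_left h5 hCq0
  have h9 : (N + 4 * Cq) / g ^ 2 * ‖h‖ ^ 2
      = N * (‖h‖ ^ 2 / g ^ 2) + Cq * (4 * ‖h‖ ^ 2 / g ^ 2) := by ring
  linarith

/-- Markov's inequality for the measure of the set where `u` is large. -/
lemma bad_set_measure (n : ℕ) [NeZero n] {s : ℝ} (hs : 0 < s) {u : Euc n → ℝ} (hu : MemA n s u)
    {x : Euc n} (hx : x ∈ ball (e1 n) (1 / 2)) {r : ℝ} (hr4 : r ≤ 1 / 4) (hux : 0 < u x)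
    (hbm : MeasurableSet {y ∈ ball x r | u x / 2 < u y}) :
    volume.real {y ∈ ball x r | u x / 2 < u y} * u x ≤
      8 * (1 + 2 ^ ((n : ℝ) + 2 * s + 2)) * ANorm n s u := by
  set m := (n : ℝ) + 2 * s + 2 with hm
  have hm0 : 0 ≤ m := by positivity
  set bad := {y ∈ ball x r | u x / 2 < u y} with hbad
  have hy : ∀ y ∈ bad, 1 / 4 < y 0 ∧ ‖y‖ ≤ 2 := fun y hy => by
    by_cases hxy : 0 < ‖x - y‖
    · have := aKernel_near n hs hx hr4 hy.1 hxy
      exact ⟨this.1, this.2.1⟩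
    · have hxy' : x = y := by
        have := le_antisymm (not_lt.1 hxy) (norm_nonneg _)
        exact sub_eq_zero.1 (norm_eq_zero.1 this)
      obtain ⟨h1, h2, h3⟩ := near_e1 n hx
      rw [← hxy']
      exact ⟨by linarith, by linarith⟩
  have hfin : volume bad ≠ ⊤ :=
    ((measure_mono (fun y hy => hy.1)).trans_lt (measure_ball_lt_top (x := x) (r := r))).ne
  have hsub : bad ⊆ halfSpace n := fun y h => by
    have := (hy y h).1
    show 0 < y 0
    linarith
  have h1 : ∫ _ in bad, (1 / 4 * (u x / 2) / (1 + 2 ^ m)) ≤ ANorm n s u := by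
    have h2 : ∫ y in bad, (y 0 * |u y| / (1 + ‖y‖ ^ m)) ≤ ANorm n s u := by
      refine setIntegral_mono_set hu.2.2 ?_ (hsub.eventuallyLE)
      refine (ae_restrict_iff' (measurableSet_halfSpace n)).2 (ae_of_all _ fun y hy => ?_)
      have : 0 < y 0 := hy
      simp only [Pi.zero_apply]
      positivity
    refine le_trans ?_ h2
    refine setIntegral_mono_on (integrableOn_const hfin) (hu.2.2.mono_set hsub) hbm fun y h => ?_
    obtain ⟨h3, h4⟩ := hy y h
    have h5 : u x / 2 ≤ |u y| := h.2.le.trans (le_abs_self _)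
    gcongr
  rw [setIntegral_const, smul_eq_mul] at h1
  have h2m : 0 < 1 + (2 : ℝ) ^ m := by positivity
  have h6 : volume.real bad * u x =
      8 * (1 + 2 ^ m) * (volume.real bad * (1 / 4 * (u x / 2) / (1 + 2 ^ m))) := by
    field_simp; ring
  rw [h6]
  gcongr

set_option maxHeartbeats 1000000 in
/-- The core estimate: a bound for the maximum of `(R² - |y - e₁|²)^{n+2} u(y)`. -/
lemma touching_bound (n : ℕ) [NeZero n] {s : ℝ} (hs : 0 < s) (hs1 : s < 1) (K : ℝ) :
    ∃ T : ℝ, 0 < T ∧ ∀ (R M c L : ℝ) (u : Euc n → ℝ) (x : Euc n), 0 < R → R ≤ 1 / 2 → 0 ≤ M →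
      |c| ≤ K → ContinuousOn u (ball (e1 n) R) → MemA n s u → x ∈ ball (e1 n) R → 0 < u x →
      (∀ y ∈ ball (e1 n) R,
        u y * (R ^ 2 - ‖y - e1 n‖ ^ 2) ^ (n + 2) ≤ u x * (R ^ 2 - ‖x - e1 n‖ ^ 2) ^ (n + 2)) →
      HasAntiFracLap n s u x L → L + c * u x ≤ M →
      u x * (R ^ 2 - ‖x - e1 n‖ ^ 2) ^ (n + 2) ≤ T * (ANorm n s u + M) := by
  obtain ⟨Cq, hCq0, hCq⟩ := inv_pow_le_quadratic (n + 2)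
  obtain ⟨J, hJ, hnear⟩ := near_lower_bound n hs hs1
  obtain ⟨C3, hC3, hfar⟩ := far_lower_bound n hs
  set ω := volume.real (ball (0 : Euc n) 1) with hω
  have hω0 : 0 < ω := volume_unitBall_pos n
  set k := cns n s with hk
  have hk0 : 0 < k := cns_pos n hs hs1
  set D := (((n + 2 : ℕ) : ℝ) + 4 * Cq) * J with hD
  set m := (n : ℝ) + 2 * s + 2 with hm
  set p := (n : ℝ) + 2 * s with hp
  -- `θ` is the size of the ball relative to the barrier; it is small enough that the
  -- positive part of the operator absorbs the quadratic, regular and zeroth order terms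
  obtain ⟨θ, hθ0, hθN, hθ⟩ : ∃ θ : ℝ, 0 < θ ∧ θ ≤ 1 / (4 * ((n + 2 : ℕ) : ℝ)) ∧
      k * (D * θ ^ 2) + k * (2 ^ p * ω) * θ ^ (2 * s) + |K| * θ ^ (2 * s) ≤ k * ω / 32 := by
    have hc : Continuous fun θ : ℝ =>
        k * (D * θ ^ 2) + k * (2 ^ p * ω) * θ ^ (2 * s) + |K| * θ ^ (2 * s) := by
      have : Continuous fun θ : ℝ => θ ^ (2 * s) :=
        continuous_id.rpow_const fun _ => Or.inr (by positivity)
      fun_prop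
    have h0 := (hc.tendsto 0).mono_left (nhdsWithin_le_nhds (s := Set.Ioi (0 : ℝ)))
    have h0s : (0 : ℝ) ^ (2 * s) = 0 := Real.zero_rpow (by positivity)
    simp only [h0s, mul_zero, add_zero, ne_eq, OfNat.ofNat_ne_zero, not_false_eq_true,
      zero_pow] at h0
    have h1 := h0.eventually (ge_mem_nhds (show 0 < k * ω / 32 by positivity))
    have h2 : ∀ᶠ θ in 𝓝[>] (0 : ℝ), θ ≤ 1 / (4 * ((n + 2 : ℕ) : ℝ)) :=
      (ge_mem_nhds (show (0 : ℝ) < 1 / (4 * ((n + 2 : ℕ) : ℝ)) by positivity)).filter_mono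
        nhdsWithin_le_nhds
    obtain ⟨θ, ha, hb, hc⟩ := (h1.and (h2.and self_mem_nhdsWithin)).exists
    exact ⟨θ, hc, hb, ha⟩
  have hN1 : (1 : ℝ) ≤ ((n + 2 : ℕ) : ℝ) := by exact_mod_cast (by omega : 1 ≤ n + 2)
  have hθ4 : θ ≤ 1 / 4 := hθN.trans (by gcongr; linarith)
  set T1 := 4 * (8 * (1 + 2 ^ m)) / (ω * θ ^ n) with hT1
  set T2 := 32 / (k * ω) * (1 + k * C3 / θ ^ (n + 2)) with hT2
  have hT1p : 0 < T1 := by positivity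
  have hT2p : 0 < T2 := by positivity
  refine ⟨T1 + T2, by positivity, ?_⟩
  intro R M c L u x hR0 hR hM hc huc hu hxR hux hmax hL hLM
  set g := R ^ 2 - ‖x - e1 n‖ ^ 2 with hg
  have hx : x ∈ ball (e1 n) (1 / 2) := ball_subset_ball hR hxR
  have hg0 : 0 < g := by
    rw [mem_ball, dist_eq_norm] at hxR
    have := (sq_lt_sq₀ (norm_nonneg _) hR0.le).2 hxR
    linarith
  have hg1 : g ≤ 1 := by nlinarith [sq_nonneg ‖x - e1 n‖]
  have hAN := anorm_nonneg n s u
  set r := θ * g with hr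
  have hr0 : 0 < r := by positivity
  have hrθ : r ≤ θ := mul_le_of_le_one_right hθ0.le hg1
  have hrg : r ≤ g / 4 := by rw [hr]; nlinarith
  have htq := touching_quadratic n hCq0 hCq hR0 hR hux hmax hg hg0 hrg
  have hbm : MeasurableSet {y ∈ ball x r | u x / 2 < u y} := by
    have h1 : ContinuousOn u (ball x r) := huc.mono fun y hy => (htq y hy).1
    exact (h1.isOpen_inter_preimage isOpen_ball (isOpen_Ioi (a := u x / 2))).measurableSet
  have hbad := bad_set_measure n hs hu hx (hrθ.trans hθ4) hux hbm
  rw [← hm] at hbad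
  by_cases hbv : volume.real {y ∈ ball x r | u x / 2 < u y} ≤ volume.real (ball x r) / 4
  · -- the operator is large at `x`
    have hw : ‖(2 * ((n + 2 : ℕ) : ℝ) / g) • (x - e1 n)‖ * r ≤ 1 / 4 := by
      rw [mem_ball, dist_eq_norm] at hx
      rw [norm_smul, Real.norm_of_nonneg (by positivity), hr]
      calc 2 * ((n + 2 : ℕ) : ℝ) / g * ‖x - e1 n‖ * (θ * g)
          = 2 * ((n + 2 : ℕ) : ℝ) * ‖x - e1 n‖ * θ := by field_simp
        _ ≤ 2 * ((n + 2 : ℕ) : ℝ) * (1 / 2) * (1 / (4 * ((n + 2 : ℕ) : ℝ))) := by gcongr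
        _ = 1 / 4 := by field_simp
    have hLlow : k * (u x * (ω / 16 * r ^ (-(2 * s))
        - (((n + 2 : ℕ) : ℝ) + 4 * Cq) / g ^ 2 * (J * r ^ (2 - 2 * s)) - 2 ^ p * ω)
        - C3 * r ^ (-m) * ANorm n s u) ≤ L := by
      refine ge_of_tendsto hL ?_
      have hev : ∀ᶠ ε in 𝓝[>] (0 : ℝ), ε ≤ r / 4 :=
        (ge_mem_nhds (show (0 : ℝ) < r / 4 by positivity)).filter_mono nhdsWithin_le_nhds
      filter_upwards [hev, self_mem_nhdsWithin] with ε hε4 hε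
      have hε0 : 0 < ε := hε
      have h1 := hnear u x _ r ε ((((n + 2 : ℕ) : ℝ) + 4 * Cq) / g ^ 2) hu hx hr0
        (hrθ.trans hθ4) hε0 hε4 (by positivity) hux hw (fun y hy => (htq y hy).2) hbm hbv
      have h2 := hfar u x r hu hx hr0 (by linarith) hux.le
      have hx0 : 0 < x 0 := by linarith [(near_e1 n hx).1]
      have hBH : ball x r ⊆ halfSpace n := fun y hy => by
        have := (near_e1 n (ball_subset_ball hR (htq y hy).1)).1
        show 0 < y 0
        linarith
      have hsplit : halfSpace n \ ball x ε = (ball x r \ ball x ε) ∪ (halfSpace n \ ball x r) := by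
        have hεr : ball x ε ⊆ ball x r := ball_subset_ball (by linarith)
        ext y
        constructor
        · rintro ⟨ha, hb⟩
          by_cases hc : y ∈ ball x r
          · exact Or.inl ⟨hc, hb⟩
          · exact Or.inr ⟨ha, hc⟩
        · rintro (⟨ha, hb⟩ | ⟨ha, hb⟩)
          · exact ⟨hBH ha, hb⟩
          · exact ⟨ha, fun h => hb (hεr h)⟩
      have hint : IntegrableOn (fun y => aKernel n s x y * (u x - u y))
          (halfSpace n \ ball x ε) := by
        simp only [mul_sub]
        exact ((aKernel_integrableOn n hs hx0 hε0).mul_const _).sub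
          (aKernel_mul_integrableOn n hs hu hx hε0 (by linarith))
      rw [hsplit] at hint ⊢
      rw [setIntegral_union (Set.disjoint_left.2 fun y hy hy' => hy'.2 hy.1)
        ((measurableSet_halfSpace n).diff measurableSet_ball)
        (hint.mono_set Set.subset_union_left) (hint.mono_set Set.subset_union_right)]
      have h3 : 0 ≤ cns 1 s / s * u x * (x 0) ^ (-(2 * s)) := by
        have := cns_pos 1 hs hs1
        positivity
      have h4 : k * (u x * (ω / 16 * r ^ (-(2 * s))
        - (((n + 2 : ℕ) : ℝ) + 4 * Cq) / g ^ 2 * (J * r ^ (2 - 2 * s)) - 2 ^ p * ω)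
        - C3 * r ^ (-m) * ANorm n s u) ≤ k * ((∫ y in ball x r \ ball x ε,
          aKernel n s x y * (u x - u y)) + ∫ y in halfSpace n \ ball x r,
          aKernel n s x y * (u x - u y)) := by
        gcongr k * ?_
        linarith
      linarith
    have hcu : -(|K| * u x) ≤ c * u x := by
      have h1 : -|K| ≤ c := by linarith [neg_abs_le c, le_abs_self K]
      have := mul_le_mul_of_nonneg_right h1 hux.le
      linarith
    -- all powers of `r` expressed through `P = r ^ (2 s)` and natural powers
    set P := r ^ (2 * s) with hP
    have hP0 : 0 < P := by positivity
    have hPθ : P ≤ θ ^ (2 * s) := Real.rpow_le_rpow hr0.le hrθ (by positivity)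
    have hP1 : P ≤ 1 := Real.rpow_le_one hr0.le (by linarith) (by positivity)
    have e1' : r ^ (-(2 * s)) = P⁻¹ := Real.rpow_neg hr0.le _
    have e2 : r ^ (2 - 2 * s) = r ^ 2 * P⁻¹ := by
      rw [Real.rpow_sub hr0, div_eq_mul_inv, Real.rpow_two]
    have e3 : r ^ (-m) = P⁻¹ * (r ^ (n + 2))⁻¹ := by
      rw [Real.rpow_neg hr0.le, ← mul_inv, ← Real.rpow_natCast r (n + 2), ← Real.rpow_add hr0, hm]
      congr 2; push_cast; ring
    rw [e1', e2, e3] at hLlow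
    have e4 : (((n + 2 : ℕ) : ℝ) + 4 * Cq) / g ^ 2 * (J * (r ^ 2 * P⁻¹)) = D * θ ^ 2 * P⁻¹ := by
      rw [hr, hD]; field_simp
    rw [e4] at hLlow
    have hA1 : k * (u x * (ω / 16 * P⁻¹ - D * θ ^ 2 * P⁻¹ - 2 ^ p * ω)
        - C3 * (P⁻¹ * (r ^ (n + 2))⁻¹) * ANorm n s u) - |K| * u x ≤ M := by linarith
    have hA2 : u x * (k * (ω / 16) - (k * (D * θ ^ 2) + k * (2 ^ p * ω) * P + |K| * P))
        ≤ P * M + k * C3 * (r ^ (n + 2))⁻¹ * ANorm n s u := by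
      have := mul_le_mul_of_nonneg_left hA1 hP0.le
      have e5 : P * (k * (u x * (ω / 16 * P⁻¹ - D * θ ^ 2 * P⁻¹ - 2 ^ p * ω)
        - C3 * (P⁻¹ * (r ^ (n + 2))⁻¹) * ANorm n s u) - |K| * u x)
        = u x * (k * (ω / 16) - (k * (D * θ ^ 2) + k * (2 ^ p * ω) * P + |K| * P))
          - k * C3 * (r ^ (n + 2))⁻¹ * ANorm n s u := by
        field_simp
        ring
      linarith
    have hA3 : k * ω / 32 ≤
        k * (ω / 16) - (k * (D * θ ^ 2) + k * (2 ^ p * ω) * P + |K| * P) := by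
      have h1 : k * (2 ^ p * ω) * P ≤ k * (2 ^ p * ω) * θ ^ (2 * s) := by gcongr
      have h2 : |K| * P ≤ |K| * θ ^ (2 * s) := by gcongr
      linarith
    have hA4 : u x * (k * ω / 32) ≤ M + k * C3 * (r ^ (n + 2))⁻¹ * ANorm n s u := by
      have h1 := mul_le_mul_of_nonneg_left hA3 hux.le
      have h2 := mul_le_of_le_one_left hM hP1
      linarith
    have hgN : g ^ (n + 2) ≤ 1 := pow_le_one₀ hg0.le hg1
    calc u x * g ^ (n + 2) = 32 / (k * ω) * ((u x * (k * ω / 32)) * g ^ (n + 2)) := by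
          field_simp
      _ ≤ 32 / (k * ω) * ((M + k * C3 * (r ^ (n + 2))⁻¹ * ANorm n s u) * g ^ (n + 2)) := by
          gcongr
      _ = 32 / (k * ω) * (M * g ^ (n + 2) + k * C3 / θ ^ (n + 2) * ANorm n s u) := by
          rw [hr, mul_pow]
          have : g ^ (n + 2) ≠ 0 := by positivity
          field_simp
      _ ≤ 32 / (k * ω) * (M * 1 + k * C3 / θ ^ (n + 2) * ANorm n s u) := by gcongr
      _ ≤ 32 / (k * ω) * ((1 + k * C3 / θ ^ (n + 2)) * (ANorm n s u + M)) := by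
          gcongr
          have : 0 ≤ k * C3 / θ ^ (n + 2) * M := by positivity
          linarith
      _ = T2 * (ANorm n s u + M) := by rw [hT2]; ring
      _ ≤ _ := by
          gcongr
          linarith
  · -- `u` is large on a substantial part of the ball, so `‖u‖_{𝒜ₛ}` itself controls `u x`
    rw [not_le, volume_ball_euc n x hr0.le, ← hω] at hbv
    have h1 := (mul_le_mul_of_nonneg_right hbv.le hux.le).trans hbad
    have hgn : g ^ (n + 2) ≤ g ^ n := pow_le_pow_of_le_one hg0.le hg1 (by omega)
    calc u x * g ^ (n + 2) ≤ u x * g ^ n := by gcongr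
      _ = 4 / (ω * θ ^ n) * (r ^ n * ω / 4 * u x) := by
          rw [hr, mul_pow]; field_simp
      _ ≤ 4 / (ω * θ ^ n) * (8 * (1 + 2 ^ m) * ANorm n s u) := by gcongr
      _ = T1 * ANorm n s u := by rw [hT1]; ring
      _ ≤ (T1 + T2) * (ANorm n s u + M) := by
          gcongr
          · linarith
          · linarith

/-- interior local boundedness of sub-solutions (Proposition 3.4). -/
theorem stmt12
    (n : ℕ) [NeZero n] (s : ℝ) (hs : s ∈ Set.Ioo (0 : ℝ) 1)
    (ρ : ℝ) (hρ : ρ ∈ Set.Ioo (0 : ℝ) (1 / 2)) (K : ℝ) :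
    ∃ C > (0 : ℝ),
      ∀ (M : ℝ) (c u : Euc n → ℝ) (α : ℝ),
        0 ≤ M →
        0 < α → NotInteger (2 * s + α) →
        (∀ x ∈ Metric.ball (e1 n) ρ, |c x| ≤ K) →
        MemHolderOn (2 * s + α) (Metric.ball (e1 n) ρ) u →
        MemA n s u →
        (∀ x ∈ Metric.ball (e1 n) ρ,
          ∃ L : ℝ, HasAntiFracLap n s u x L ∧ L + c x * u x ≤ M) →
        ∀ x ∈ Metric.ball (e1 n) (ρ / 2), u x ≤ C * (ANorm n s u + M) := by
  obtain ⟨hs0, hs1⟩ := hs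
  obtain ⟨hρ0, hρ1⟩ := hρ
  obtain ⟨T, hT, hbound⟩ := touching_bound n hs0 hs1 K
  have hq : 0 < (5 * ρ ^ 2 / 16) ^ (n + 2) := by positivity
  refine ⟨T / (5 * ρ ^ 2 / 16) ^ (n + 2), by positivity, ?_⟩
  intro M c u α hM _ _ hc hHol hu hsub z hz
  have hAN := anorm_nonneg n s u
  set R := 3 * ρ / 4 with hR
  have huc : ContinuousOn u (ball (e1 n) ρ) := hHol.1.continuousOn
  have hclosed : closedBall (e1 n) R ⊆ ball (e1 n) ρ := closedBall_subset_ball (by linarith)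
  have hzR : z ∈ ball (e1 n) R := ball_subset_ball (by linarith) hz
  rcases le_or_gt (u z) 0 with huz | huz
  · exact huz.trans (by positivity)
  set F : Euc n → ℝ := fun y => u y * (R ^ 2 - ‖y - e1 n‖ ^ 2) ^ (n + 2) with hF
  have hFc : ContinuousOn F (closedBall (e1 n) R) :=
    (huc.mono hclosed).mul (by fun_prop)
  obtain ⟨x, hxR, hxmax⟩ := (isCompact_closedBall (e1 n) R).exists_isMaxOn
    ⟨z, ball_subset_closedBall hzR⟩ hFc
  have hpos : ∀ y ∈ ball (e1 n) R, 0 < R ^ 2 - ‖y - e1 n‖ ^ 2 := fun y hy => by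
    rw [mem_ball, dist_eq_norm] at hy
    have := (sq_lt_sq₀ (norm_nonneg _) (by linarith)).2 hy
    linarith
  have hFz : F z ≤ F x := hxmax (ball_subset_closedBall hzR)
  have hFz0 : 0 < F z := mul_pos huz (pow_pos (hpos z hzR) _)
  -- the weight vanishes on the sphere, so the positive maximum is attained inside
  have hxin : x ∈ ball (e1 n) R := by
    rw [mem_ball]
    refine lt_of_le_of_ne hxR fun h => ?_
    have : F x = 0 := by
      simp only [hF]
      rw [← dist_eq_norm, h, sub_self, zero_pow (by omega), mul_zero]
    linarith
  have hux : 0 < u x :=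
    pos_of_mul_pos_left (hFz0.trans_le hFz) (pow_pos (hpos x hxin) _).le
  obtain ⟨L, hL, hLM⟩ := hsub x (hclosed hxR)
  have hmain := hbound R M (c x) L u x (by linarith) (by linarith) hM (hc x (hclosed hxR))
    (huc.mono (ball_subset_closedBall.trans hclosed)) hu hxin hux
    (fun y hy => hxmax (ball_subset_closedBall hy)) hL hLM
  have hgz : 5 * ρ ^ 2 / 16 ≤ R ^ 2 - ‖z - e1 n‖ ^ 2 := by
    rw [mem_ball, dist_eq_norm] at hz
    have := (sq_lt_sq₀ (norm_nonneg _) (by linarith)).2 hz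
    rw [hR]
    nlinarith
  rw [div_mul_eq_mul_div, le_div_iff₀ hq]
  calc u z * (5 * ρ ^ 2 / 16) ^ (n + 2) ≤ F z := by
        simp only [hF]
        gcongr
    _ ≤ F x := hFz
    _ ≤ _ := hmain

end
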